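/- arXiv:2109.00905 — 5 statements merged into one kernel-verified Lean document; each statement's English description precedes it below -/
import Mathlib

section
/- Let 0 < v ≤ 1, let f ∈ F(v) and g ∈ F(1) be strategies of player I and player II respectively for the asymmetric rendezvous game on the line with initial distance 1, and assume the four rendezvous times t¹, t², t³, t⁴ of the pair (f,g) are all finite. Then there exists g̃ ∈ F(1) whose four rendezvous times (with the same f) are all finite, such that g̃ is piecewise linear with slope of absolute value exactly 1 on each interval between consecutive rendezvous times of the pair (f,g̃), and such that t̃¹+t̃²+t̃³+t̃⁴ ≤ t¹+t²+t³+t⁴, where t̃ⁱ are the rendezvous times of (f,g̃). In other words, it is never a loss for the fast player to move at maximal speed between rendezvous times. -/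
/-!
In the frame of player II, the four meetings are hits of the path `g` on the four target curves
`t ↦ b * (f t - o)` with `o, b ∈ {1, -1}`. Since `v ≤ 1`, these curves are `1`-Lipschitz, and so is
`g`. Let `s i` be the time at which `g` first hits curve `i`.

The new path is greedy: among the curves not hit yet, aim at the one with least `s i` and run at
full speed towards it until it is hit; then aim again. The invariant is that at every turning point
`(τ, p)` all the points `(s i, g (s i))` of the remaining curves lie in the future light cone
`|g (s i) - p| ≤ s i - τ`. It makes the run towards curve `i` succeed at some time `τ' ≤ s i`, by the
intermediate value theorem. It survives the hit, because curve `i` leads from the hit to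
`(s i, g (s i))` at speed at most `1`, and from there `g` itself leads to every later point.

Curves crossed on the way are hit even earlier and dropped from the list of targets. Hence every
turning point is a first hitting time, so the path has slope `1` or `-1` between consecutive
rendezvous times, and every rendezvous time is at most the original one. The construction is
`exists_greedy_path`, an induction on the set of remaining curves.
-/

open Set

/-- `Strat α` is the set of trajectories with speed bound `α`: functions starting at `0`
which are `α`-Lipschitz on `[0, ∞)`. -/
def Strat (α : ℝ) : Set (ℝ → ℝ) :=
  {f | f 0 = 0 ∧ ∀ s t : ℝ, 0 ≤ s → 0 ≤ t → |f s - f t| ≤ α * |s - t|}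

/-- The set of times at which player I (trajectory `f`) meets the agent of player II
starting at `o` with forward direction `b` (trajectory `o + b • g`). -/
def meetSet (f g : ℝ → ℝ) (o b : ℝ) : Set ℝ := {t | 0 ≤ t ∧ f t = o + b * g t}

/-- The rendezvous time with the agent `(o, b)`. -/
noncomputable def meetTime (f g : ℝ → ℝ) (o b : ℝ) : ℝ := sInf (meetSet f g o b)

/-- All four rendezvous times are finite, i.e. the four meeting sets are nonempty. -/
def AllFinite (f g : ℝ → ℝ) : Prop :=
  (meetSet f g 1 1).Nonempty ∧ (meetSet f g 1 (-1)).Nonempty ∧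
    (meetSet f g (-1) 1).Nonempty ∧ (meetSet f g (-1) (-1)).Nonempty

/-- The sum `t¹ + t² + t³ + t⁴` of the four rendezvous times. -/
noncomputable def sumTimes (f g : ℝ → ℝ) : ℝ :=
  meetTime f g 1 1 + meetTime f g 1 (-1) + meetTime f g (-1) 1 + meetTime f g (-1) (-1)

/-- The multiset of the four rendezvous times of the pair `(f, g)`. -/
noncomputable def timesMultiset (f g : ℝ → ℝ) : Multiset ℝ :=
  {meetTime f g 1 1, meetTime f g 1 (-1), meetTime f g (-1) 1, meetTime f g (-1) (-1)}

/-- The rendezvous value of the game: infimum of `t¹ + t² + t³ + t⁴` over all pairs of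
strategies with finite rendezvous times, for slow-player speed bound `v`. -/
noncomputable def V (v : ℝ) : ℝ :=
  sInf {S | ∃ f ∈ Strat v, ∃ g ∈ Strat 1, AllFinite f g ∧ S = sumTimes f g}

/-- Two continuous functions which agree at some time after `τ` have a first such time. -/
lemma isLeast_hit {G K : ℝ → ℝ} (hG : Continuous G) (hK : Continuous K) {τ : ℝ}
    (hne : {t | τ ≤ t ∧ G t = K t}.Nonempty) :
    IsLeast {t | τ ≤ t ∧ G t = K t} (sInf {t | τ ≤ t ∧ G t = K t}) := by
  have hcl : IsClosed {t | τ ≤ t ∧ G t = K t} :=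
    (isClosed_le continuous_const continuous_id).inter (isClosed_eq hG hK)
  have hbdd : BddBelow {t | τ ≤ t ∧ G t = K t} := ⟨τ, fun t ht => ht.1⟩
  exact ⟨hcl.csInf_mem hne hbdd, fun t ht => csInf_le hbdd ht⟩

lemma continuous_of_abs_sub_le {K : ℝ → ℝ} (hK : ∀ s t, |K s - K t| ≤ |s - t|) :
    Continuous K := by
  have : LipschitzWith 1 K := LipschitzWith.of_dist_le_mul fun s t => by
    simpa [Real.dist_eq] using hK s t
  exact this.continuous

/-- If the curve `K` at time `b` lies in the future light cone of `(τ, p)`, then one of the two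
rays of slope `±1` from `(τ, p)` hits `K` no later than `b`. -/
lemma exists_ray_hit {K : ℝ → ℝ} (hK : Continuous K) {τ p b : ℝ} (hb : |K b - p| ≤ b - τ) :
    ∃ d : ℝ, (d = 1 ∨ d = -1) ∧ ∃ t, τ ≤ t ∧ t ≤ b ∧ p + d * (t - τ) = K t := by
  have hτb : τ ≤ b := by linarith [abs_nonneg (K b - p)]
  obtain ⟨h1, h2⟩ := abs_le.mp hb
  rcases le_total p (K τ) with h | h
  · have hcont : ContinuousOn (fun t => p + 1 * (t - τ) - K t) (Icc τ b) := by fun_prop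
    obtain ⟨t, ht, h0⟩ := intermediate_value_Icc hτb hcont
      (show (0 : ℝ) ∈ Icc _ _ from ⟨by linarith, by linarith⟩)
    exact ⟨1, Or.inl rfl, t, ht.1, ht.2, sub_eq_zero.mp h0⟩
  · have hcont : ContinuousOn (fun t => p + (-1) * (t - τ) - K t) (Icc τ b) := by fun_prop
    obtain ⟨t, ht, h0⟩ := intermediate_value_Icc' hτb hcont
      (show (0 : ℝ) ∈ Icc _ _ from ⟨by linarith, by linarith⟩)
    exact ⟨-1, Or.inr rfl, t, ht.1, ht.2, sub_eq_zero.mp h0⟩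

/-- The greedy full-speed path from the point `(τ, p)`, given that the points `(S i, g (S i))` of
the remaining curves `K i`, `i ∈ R`, lie in its future light cone. It first hits `K i` at a time
`T i ≤ S i`. The last clause encodes unit slope between consecutive hitting times: the path has
constant slope `±1` on each interval without a hitting time in its interior. The path is also
defined, and `1`-Lipschitz, before time `τ`; its values there play no role. -/
lemma exists_greedy_path {ι : Type*} [DecidableEq ι] {K : ι → ℝ → ℝ} {g : ℝ → ℝ} {S : ι → ℝ}
    (hK : ∀ i s t, |K i s - K i t| ≤ |s - t|) (hg : ∀ s t, |g s - g t| ≤ |s - t|)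
    (hS : ∀ i, g (S i) = K i (S i)) (R : Finset ι) :
    ∀ τ p : ℝ, (∀ i ∈ R, |g (S i) - p| ≤ S i - τ) →
      ∃ (G : ℝ → ℝ) (T : ι → ℝ), (∀ s t, |G s - G t| ≤ |s - t|) ∧ G τ = p ∧
        (∀ i ∈ R, IsLeast {t | τ ≤ t ∧ G t = K i t} (T i) ∧ T i ≤ S i) ∧
        ∀ a b, τ ≤ a → (∀ i ∈ R, T i ≤ a ∨ b ≤ T i) →
          ∃ d : ℝ, (d = 1 ∨ d = -1) ∧ ∀ s, a ≤ s → s ≤ b → G s = G a + d * (s - a) := by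
  induction R using Finset.strongInduction with
  | H R ih =>
  intro τ p hcone
  have hKc : ∀ i, Continuous (K i) := fun i => continuous_of_abs_sub_le (hK i)
  rcases R.eq_empty_or_nonempty with rfl | hne
  · refine ⟨fun t => p + (t - τ), fun _ => 0, fun s t => ?_, by simp, by simp, fun a b _ _ =>
      ⟨1, Or.inl rfl, fun s _ _ => by ring⟩⟩
    exact le_of_eq (congrArg _ (by ring))
  obtain ⟨i, hiR, hmin⟩ := R.exists_min_image S hne
  obtain ⟨d, hd, t₀, hτt, htS, ht₀⟩ := exists_ray_hit (hKc i) (hS i ▸ hcone i hiR)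
  have hLc : Continuous fun t => p + d * (t - τ) := by fun_prop
  have hLl : ∀ s t : ℝ, |(p + d * (s - τ)) - (p + d * (t - τ))| ≤ |s - t| := by
    intro s t
    have : (p + d * (s - τ)) - (p + d * (t - τ)) = d * (s - t) := by ring
    rw [this, abs_mul]
    rcases hd with rfl | rfl <;> simp
  obtain ⟨⟨hττ', hhit⟩, hfirst⟩ := isLeast_hit hLc (hKc i) (τ := τ) ⟨t₀, hτt, ht₀⟩
  set τ' := sInf {t | τ ≤ t ∧ p + d * (t - τ) = K i t}
  have hτ'S : τ' ≤ S i := (hfirst ⟨hτt, ht₀⟩).trans htS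
  -- The curves not crossed by the ray up to time `τ'` are those left for the rest of the path.
  classical
  let R' := R.filter fun j => ∀ t, τ ≤ t → t ≤ τ' → p + d * (t - τ) ≠ K j t
  have hR'R : R' ⊂ R := Finset.filter_ssubset.mpr ⟨i, hiR, fun h => h τ' hττ' le_rfl hhit⟩
  have hcone' : ∀ j ∈ R', |g (S j) - K i τ'| ≤ S j - τ' := by
    intro j hj
    have hij := hmin j (hR'R.1 hj)
    have h1 := hg (S j) (S i)
    have h2 := hK i (S i) τ'
    rw [abs_of_nonneg (sub_nonneg.mpr hij)] at h1
    rw [abs_of_nonneg (sub_nonneg.mpr hτ'S), ← hS i] at h2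
    linarith [abs_sub_le (g (S j)) (g (S i)) (K i τ')]
  obtain ⟨G', T', hG'l, hG'τ, hG'T, hG'lin⟩ := ih R' hR'R τ' (K i τ') hcone'
  let G : ℝ → ℝ := fun t => if t ≤ τ' then p + d * (t - τ) else G' t
  have hGle : ∀ t, t ≤ τ' → G t = p + d * (t - τ) := fun t ht => if_pos ht
  have hGge : ∀ t, τ' ≤ t → G t = G' t := by
    intro t ht
    rcases ht.eq_or_lt with rfl | ht
    · rw [hGle _ le_rfl, hhit, hG'τ]
    · exact if_neg (not_le.mpr ht)
  have hGl : ∀ s t, s ≤ t → |G s - G t| ≤ |s - t| := by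
    intro s t hst
    rcases le_total t τ' with ht | ht
    · rw [hGle t ht, hGle s (hst.trans ht)]
      exact hLl s t
    rcases le_total τ' s with hs | hs
    · rw [hGge t ht, hGge s hs]
      exact hG'l s t
    · have h1 := hLl s τ'
      have h2 := hG'l τ' t
      rw [← hGle s hs, ← hGle τ' le_rfl, abs_of_nonpos (sub_nonpos.mpr hs)] at h1
      rw [← hGge τ' le_rfl, ← hGge t ht, abs_of_nonpos (sub_nonpos.mpr ht)] at h2
      rw [abs_of_nonpos (sub_nonpos.mpr hst)]
      linarith [abs_sub_le (G s) (G τ') (G t)]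
  have hGl' : ∀ s t, |G s - G t| ≤ |s - t| := by
    intro s t
    rcases le_total s t with h | h
    · exact hGl s t h
    · rw [abs_sub_comm, abs_sub_comm s t]
      exact hGl t s h
  have hGc := continuous_of_abs_sub_le hGl'
  let T : ι → ℝ := fun j => sInf {t | τ ≤ t ∧ G t = K j t}
  have hT : ∀ j, ∀ t, τ ≤ t → G t = K j t →
      IsLeast {t | τ ≤ t ∧ G t = K j t} (T j) ∧ T j ≤ t := by
    intro j t h1 h2
    have h := isLeast_hit hGc (hKc j) (τ := τ) ⟨t, h1, h2⟩
    exact ⟨h, h.2 ⟨h1, h2⟩⟩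
  have hTR' : ∀ j ∈ R', T j = T' j := by
    intro j hj
    obtain ⟨⟨⟨h1, h2⟩, h3⟩, -⟩ := hG'T j hj
    rw [← hGge _ h1] at h2
    obtain ⟨⟨⟨h4, h5⟩, -⟩, h7⟩ := hT j (T' j) (hττ'.trans h1) h2
    refine le_antisymm h7 (h3 ⟨?_, ?_⟩)
    · by_contra! hlt
      rw [hGle _ hlt.le] at h5
      exact (Finset.mem_filter.mp hj).2 _ h4 hlt.le h5
    · rw [← hGge, h5]
      by_contra! hlt
      rw [hGle _ hlt.le] at h5
      exact (Finset.mem_filter.mp hj).2 _ h4 hlt.le h5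
  have hTi : T i = τ' := by
    obtain ⟨⟨⟨h4, h5⟩, -⟩, h7⟩ := hT i τ' hττ' (by rw [hGle _ le_rfl, hhit])
    refine le_antisymm h7 (hfirst ⟨h4, ?_⟩)
    rw [← hGle _ h7, h5]
  refine ⟨G, T, hGl', by simp [hGle τ hττ'], fun j hj => ?_, fun a b ha hab => ?_⟩
  · by_cases hjR : j ∈ R'
    · obtain ⟨⟨⟨h1, h2⟩, -⟩, h4⟩ := hG'T j hjR
      obtain ⟨h5, h6⟩ := hT j (T' j) (hττ'.trans h1) (by rw [hGge _ h1, h2])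
      exact ⟨h5, h6.trans h4⟩
    · have : ∃ t, τ ≤ t ∧ t ≤ τ' ∧ p + d * (t - τ) = K j t := by
        by_contra! h
        exact hjR (Finset.mem_filter.mpr ⟨hj, h⟩)
      obtain ⟨t, h1, h2, h3⟩ := this
      obtain ⟨h5, h6⟩ := hT j t h1 (by rw [hGle _ h2, h3])
      exact ⟨h5, h6.trans (h2.trans (hτ'S.trans (hmin j hj)))⟩
  · -- The turning time `τ' = T i` is a hitting time, so `[a, b]` lies on one side of it.
    rcases hTi ▸ hab i hiR with h | h
    · obtain ⟨e, he, hlin⟩ := hG'lin a b h fun j hj => hTR' j hj ▸ hab j (hR'R.1 hj)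
      refine ⟨e, he, fun s h1 h2 => ?_⟩
      rw [hGge s (h.trans h1), hGge a h]
      exact hlin s h1 h2
    · refine ⟨d, hd, fun s h1 h2 => ?_⟩
      rw [hGle s (h2.trans h), hGle a ((h1.trans h2).trans h)]
      ring

/-- Freezing a strategy at its value at `0` for negative times makes it globally Lipschitz. -/
lemma abs_comp_max_sub_le {α : ℝ} (hα : α ≤ 1) {f : ℝ → ℝ} (hf : f ∈ Strat α)
    (s t : ℝ) : |f (max s 0) - f (max t 0)| ≤ |s - t| := by
  refine (hf.2 _ _ (le_max_right _ _) (le_max_right _ _)).trans ?_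
  calc α * |max s 0 - max t 0| ≤ 1 * |max s 0 - max t 0| := by gcongr
    _ ≤ |s - t| := by rw [one_mul]; exact abs_max_sub_max_le_abs s t 0

/-- For any pair of strategies with finite rendezvous times, the fast player can replace
his strategy by one that is piecewise linear with slope of absolute value exactly `1`
between consecutive rendezvous times, keeps all four rendezvous times finite, and does not
increase the sum of the four rendezvous times. -/
theorem fast_player_full_speed (v : ℝ) (hv0 : 0 < v) (hv1 : v ≤ 1) (f g : ℝ → ℝ)
    (hf : f ∈ Strat v) (hg : g ∈ Strat 1) (hfin : AllFinite f g) :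
    ∃ g' ∈ Strat 1, AllFinite f g' ∧ sumTimes f g' ≤ sumTimes f g ∧
      ∃ t1 t2 t3 t4 d1 d2 d3 d4 : ℝ,
        0 ≤ t1 ∧ t1 ≤ t2 ∧ t2 ≤ t3 ∧ t3 ≤ t4 ∧
        timesMultiset f g' = {t1, t2, t3, t4} ∧
        (d1 = 1 ∨ d1 = -1) ∧ (d2 = 1 ∨ d2 = -1) ∧ (d3 = 1 ∨ d3 = -1) ∧ (d4 = 1 ∨ d4 = -1) ∧
        (∀ s, 0 ≤ s → s ≤ t1 → g' s = d1 * s) ∧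
        (∀ s, t1 ≤ s → s ≤ t2 → g' s = g' t1 + d2 * (s - t1)) ∧
        (∀ s, t2 ≤ s → s ≤ t3 → g' s = g' t2 + d3 * (s - t2)) ∧
        (∀ s, t3 ≤ s → s ≤ t4 → g' s = g' t3 + d4 * (s - t3)) := by
  -- The four agents, in the order of `sumTimes`.
  let o : Fin 4 → ℝ := ![1, 1, -1, -1]
  let b : Fin 4 → ℝ := ![1, -1, 1, -1]
  have hb : ∀ i, b i = 1 ∨ b i = -1 := by intro i; fin_cases i <;> simp [b]
  let f₀ : ℝ → ℝ := fun t => f (max t 0)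
  let g₀ : ℝ → ℝ := fun t => g (max t 0)
  let K : Fin 4 → ℝ → ℝ := fun i t => b i * (f₀ t - o i)
  have hK : ∀ i s t, |K i s - K i t| ≤ |s - t| := by
    intro i s t
    have h : K i s - K i t = b i * (f₀ s - f₀ t) := by simp only [K]; ring
    have h1 := abs_comp_max_sub_le hv1 hf s t
    rw [h, abs_mul]
    rcases hb i with h | h <;> simpa [h] using h1
  have hg₀ : ∀ s t, |g₀ s - g₀ t| ≤ |s - t| := abs_comp_max_sub_le le_rfl hg
  have hmeet : ∀ (h k : ℝ → ℝ), (∀ t, 0 ≤ t → h t = k t) → ∀ i,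
      meetSet f h (o i) (b i) = {t | 0 ≤ t ∧ k t = K i t} := by
    intro h k hhk i
    ext t
    refine and_congr_right fun ht => ?_
    simp only [K, f₀, max_eq_left ht, ← hhk t ht]
    rcases hb i with h | h <;> rw [h] <;> constructor <;> intro h' <;> linarith
  have hgg₀ : ∀ t, 0 ≤ t → g t = g₀ t := fun t ht => by simp only [g₀, max_eq_left ht]
  have hne : ∀ i, (meetSet f g (o i) (b i)).Nonempty := by
    obtain ⟨h1, h2, h3, h4⟩ := hfin
    intro i
    fin_cases i
    exacts [h1, h2, h3, h4]
  let S : Fin 4 → ℝ := fun i => meetTime f g (o i) (b i)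
  have hS : ∀ i, 0 ≤ S i ∧ g₀ (S i) = K i (S i) := by
    intro i
    have h := hne i
    simp only [S, meetTime]
    rw [hmeet g g₀ hgg₀] at h ⊢
    exact (isLeast_hit (continuous_of_abs_sub_le hg₀) (continuous_of_abs_sub_le (hK i)) h).1
  obtain ⟨G, T, hGl, hG0, hGT, hGlin⟩ := exists_greedy_path hK hg₀ (fun i => (hS i).2)
    Finset.univ 0 0 (fun i _ => by
      have h := hg₀ (S i) 0
      have h0 : g₀ 0 = 0 := by simp [g₀, hg.1]
      rwa [h0, abs_of_nonneg (sub_nonneg.mpr (hS i).1)] at h)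
  have hGmeet := hmeet G G fun _ _ => rfl
  have hTmeet : ∀ i, meetTime f G (o i) (b i) = T i := fun i => by
    rw [meetTime, hGmeet]
    exact (hGT i (Finset.mem_univ i)).1.csInf_eq
  have hTne : ∀ i, (meetSet f G (o i) (b i)).Nonempty := fun i => by
    rw [hGmeet]
    exact (hGT i (Finset.mem_univ i)).1.nonempty
  have hTS : ∀ i, T i ≤ S i := fun i => (hGT i (Finset.mem_univ i)).2
  have hT0 : ∀ i, 0 ≤ T i := fun i => (hGT i (Finset.mem_univ i)).1.1.1
  have e0 : meetTime f G 1 1 = T 0 := hTmeet 0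
  have e1 : meetTime f G 1 (-1) = T 1 := hTmeet 1
  have e2 : meetTime f G (-1) 1 = T 2 := hTmeet 2
  have e3 : meetTime f G (-1) (-1) = T 3 := hTmeet 3
  refine ⟨G, ⟨hG0, fun s t _ _ => by simpa using hGl s t⟩,
    ⟨hTne 0, hTne 1, hTne 2, hTne 3⟩, ?_, ?_⟩
  · rw [sumTimes, e0, e1, e2, e3]
    exact add_le_add (add_le_add (add_le_add (hTS 0) (hTS 1)) (hTS 2)) (hTS 3)
  let σ := Tuple.sort T
  have hmono : Monotone (T ∘ σ) := Tuple.monotone_sort T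
  -- No hitting time lies strictly between consecutive entries of the sorted list.
  have hgap : ∀ k l : Fin 4, (∀ j, j ≤ k ∨ l ≤ j) →
      ∀ i ∈ Finset.univ, T i ≤ T (σ k) ∨ T (σ l) ≤ T i := by
    intro k l hkl i _
    rcases hkl (σ.symm i) with h | h
    · exact Or.inl (by simpa using hmono h)
    · exact Or.inr (by simpa using hmono h)
  obtain ⟨d1, hd1, h1⟩ := hGlin 0 (T (σ 0)) le_rfl fun i _ =>
    Or.inr (by simpa using hmono (Fin.zero_le (σ.symm i)))
  obtain ⟨d2, hd2, h2⟩ := hGlin (T (σ 0)) (T (σ 1)) (hT0 _) (hgap 0 1 (by decide))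
  obtain ⟨d3, hd3, h3⟩ := hGlin (T (σ 1)) (T (σ 2)) (hT0 _) (hgap 1 2 (by decide))
  obtain ⟨d4, hd4, h4⟩ := hGlin (T (σ 2)) (T (σ 3)) (hT0 _) (hgap 2 3 (by decide))
  refine ⟨T (σ 0), T (σ 1), T (σ 2), T (σ 3), d1, d2, d3, d4, hT0 _,
    hmono (by decide : (0 : Fin 4) ≤ 1), hmono (by decide : (1 : Fin 4) ≤ 2),
    hmono (by decide : (2 : Fin 4) ≤ 3), ?_, hd1, hd2, hd3, hd4,
    fun s hs hs' => by simpa [hG0] using h1 s hs hs', h2, h3, h4⟩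
  have hperm : (Finset.univ : Finset (Fin 4)).val.map (T ∘ σ) = Finset.univ.val.map T := by
    rw [← Multiset.map_map, Multiset.map_univ_val_equiv]
  rw [timesMultiset, e0, e1, e2, e3]
  exact hperm.symm
end

section
/- Let 0 < v ≤ 1. The rendezvous value V(v) = inf{ t¹+t²+t³+t⁴ : f ∈ F(v), g ∈ F(1) with all four rendezvous times finite } is unchanged when the infimum is restricted to pairs (f,g) of the following piecewise-linear form: writing t₁ ≤ t₂ ≤ t₃ ≤ t₄ for the four rendezvous times arranged in increasing order (with t₀ = 0), f has constant slope vᵢ ∈ [−v, v] on each interval [tᵢ₋₁, tᵢ] and g has constant slope dᵢ ∈ {−1, +1} on each interval [tᵢ₋₁, tᵢ]; moreover the restricted infimum is attained by such a pair. -/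
/-!
The four meetings only depend on the positions of the two players at the four rendezvous times,
so the game reduces to a finite-dimensional problem. A *schedule* (`IsSched`) is a list of times
`0 = t 0 ≤ … ≤ t 4` with positions `x i`, `y i` respecting the two speed bounds, such that at
times `t 1, …, t 4` the four agents are met in some order.

Sampling a pair of strategies at its sorted rendezvous times gives a schedule whose cost
`t 1 + … + t 4` is the sum of the rendezvous times (`exists_sched_of_strat`). Conversely, linear
interpolation of a schedule gives a pair of strategies meeting each agent no later than scheduled
(`exists_interp`, `meetTime_le`). Schedules of bounded cost form a compact set, a finite union of
closed sets over the orders of meeting, so an optimal schedule exists (`exists_min_sched`).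

In an optimal schedule player II always moves at full speed (`tight`): if `y` had slack on the step
leading to `t i`, the agent met at `t i` could head for player I at full speed, meet earlier, and
then follow player I (possible since `v ≤ 1`) until the original configuration at time `t i` is
reached; this lowers `t i` and leaves the other times unchanged. Hence the interpolation of an
optimal schedule has slopes `±1` for player II. By optimality it meets every agent exactly at the
scheduled time, so it is a pair of the canonical form attaining the value.
-/

open Set

/-- The pair `(f, g)` is of the canonical piecewise-linear form: writing
`t1 ≤ t2 ≤ t3 ≤ t4` for the four rendezvous times in increasing order (with `t0 = 0`),
`f` has constant slope `vᵢ ∈ [-v, v]` and `g` constant slope `dᵢ ∈ {-1, 1}` on each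
interval `[tᵢ₋₁, tᵢ]`. -/
def PLWitness (v : ℝ) (f g : ℝ → ℝ) : Prop :=
  ∃ t1 t2 t3 t4 v1 v2 v3 v4 d1 d2 d3 d4 : ℝ,
    0 ≤ t1 ∧ t1 ≤ t2 ∧ t2 ≤ t3 ∧ t3 ≤ t4 ∧
    timesMultiset f g = {t1, t2, t3, t4} ∧
    v1 ∈ Icc (-v) v ∧ v2 ∈ Icc (-v) v ∧ v3 ∈ Icc (-v) v ∧ v4 ∈ Icc (-v) v ∧
    (d1 = 1 ∨ d1 = -1) ∧ (d2 = 1 ∨ d2 = -1) ∧ (d3 = 1 ∨ d3 = -1) ∧ (d4 = 1 ∨ d4 = -1) ∧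
    (∀ s, 0 ≤ s → s ≤ t1 → f s = v1 * s) ∧
    (∀ s, t1 ≤ s → s ≤ t2 → f s = f t1 + v2 * (s - t1)) ∧
    (∀ s, t2 ≤ s → s ≤ t3 → f s = f t2 + v3 * (s - t2)) ∧
    (∀ s, t3 ≤ s → s ≤ t4 → f s = f t3 + v4 * (s - t3)) ∧
    (∀ s, 0 ≤ s → s ≤ t1 → g s = d1 * s) ∧
    (∀ s, t1 ≤ s → s ≤ t2 → g s = g t1 + d2 * (s - t1)) ∧
    (∀ s, t2 ≤ s → s ≤ t3 → g s = g t2 + d3 * (s - t2)) ∧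
    (∀ s, t3 ≤ s → s ≤ t4 → g s = g t3 + d4 * (s - t3))

/-! ### Schedules -/

/-- The starting point of agent `j` of player II. -/
def agentO : Fin 4 → ℝ := ![1, 1, -1, -1]

/-- The forward direction of agent `j` of player II. -/
def agentB : Fin 4 → ℝ := ![1, -1, 1, -1]

lemma agentB_eq (j : Fin 4) : agentB j = 1 ∨ agentB j = -1 := by
  fin_cases j <;> simp [agentB]

/-- A schedule: times `p.1` with positions `p.2.1` of player I and displacements `p.2.2` of
player II, starting from `0`, compatible with the speed bounds `v` and `1`, and meeting at the
times `p.1 1, …, p.1 4` the four agents in some order `σ`. The speed bounds force the times to be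
nondecreasing. -/
def IsSched (v : ℝ) (p : (Fin 5 → ℝ) × (Fin 5 → ℝ) × (Fin 5 → ℝ)) : Prop :=
  p.1 0 = 0 ∧ p.2.1 0 = 0 ∧ p.2.2 0 = 0 ∧
  (∀ i : Fin 4, |p.2.1 i.succ - p.2.1 i.castSucc| ≤ v * (p.1 i.succ - p.1 i.castSucc)) ∧
  (∀ i : Fin 4, |p.2.2 i.succ - p.2.2 i.castSucc| ≤ p.1 i.succ - p.1 i.castSucc) ∧
  ∃ σ : Equiv.Perm (Fin 4), ∀ i : Fin 4,
    p.2.1 i.succ = agentO (σ i) + agentB (σ i) * p.2.2 i.succ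

/-- The sum of the four meeting times of a schedule. -/
def schedCost (p : (Fin 5 → ℝ) × (Fin 5 → ℝ) × (Fin 5 → ℝ)) : ℝ := ∑ i : Fin 4, p.1 i.succ

/-! ### Rendezvous times and sampling -/

lemma Strat.continuousOn {α : ℝ} {f : ℝ → ℝ} (hf : f ∈ Strat α) : ContinuousOn f (Ici 0) := by
  have h : LipschitzOnWith (Real.toNNReal α) f (Ici 0) := by
    refine LipschitzOnWith.of_dist_le_mul fun s hs t ht => ?_
    rw [Real.dist_eq, Real.dist_eq]
    exact (hf.2 s t hs ht).trans
      (mul_le_mul_of_nonneg_right (Real.le_coe_toNNReal α) (abs_nonneg _))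
  exact h.continuousOn

lemma meetTime_mem {α β : ℝ} {f g : ℝ → ℝ} (hf : f ∈ Strat α) (hg : g ∈ Strat β) {o b : ℝ}
    (hne : (meetSet f g o b).Nonempty) : meetTime f g o b ∈ meetSet f g o b := by
  have hcl : IsClosed (meetSet f g o b) := by
    have hc : ContinuousOn (fun t => f t - (o + b * g t)) (Ici 0) :=
      (Strat.continuousOn hf).sub
        (continuousOn_const.add (continuousOn_const.mul (Strat.continuousOn hg)))
    have := hc.preimage_isClosed_of_isClosed isClosed_Ici (isClosed_singleton (x := (0 : ℝ)))
    convert this using 1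
    ext t
    simp [meetSet, sub_eq_zero]
  exact hcl.csInf_mem hne ⟨0, fun t ht => ht.1⟩

lemma meetTime_le {f g : ℝ → ℝ} {o b t : ℝ} (h : t ∈ meetSet f g o b) :
    meetTime f g o b ≤ t :=
  csInf_le ⟨0, fun _ hs => hs.1⟩ h

lemma sumTimes_eq (f g : ℝ → ℝ) :
    sumTimes f g = ∑ j, meetTime f g (agentO j) (agentB j) := by
  simp [sumTimes, Fin.sum_univ_four, agentO, agentB]

lemma timesMultiset_eq (f g : ℝ → ℝ) :
    timesMultiset f g =
      Multiset.map (fun j => meetTime f g (agentO j) (agentB j)) (Finset.univ : Finset (Fin 4)).val :=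
  rfl

lemma allFinite_iff (f g : ℝ → ℝ) :
    AllFinite f g ↔ ∀ j, (meetSet f g (agentO j) (agentB j)).Nonempty := by
  simp [AllFinite, Fin.forall_fin_succ, agentO, agentB]

/-- Sampling a pair of strategies at its sorted rendezvous times. -/
lemma exists_sched_of_strat {v : ℝ} {f g : ℝ → ℝ} (hf : f ∈ Strat v) (hg : g ∈ Strat 1)
    (hfin : AllFinite f g) : ∃ p, IsSched v p ∧ schedCost p = sumTimes f g := by
  rw [allFinite_iff] at hfin
  set τ : Fin 4 → ℝ := fun j => meetTime f g (agentO j) (agentB j) with hτ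
  have hmem : ∀ j, τ j ∈ meetSet f g (agentO j) (agentB j) := fun j => meetTime_mem hf hg (hfin j)
  set σ := Tuple.sort τ
  have hmono : Monotone (τ ∘ σ) := Tuple.monotone_sort τ
  set t : Fin 5 → ℝ := Fin.cons 0 (τ ∘ σ) with ht
  have ht0 : t 0 = 0 := rfl
  have hts : ∀ i : Fin 4, t i.succ = τ (σ i) := fun i => rfl
  have hnn : ∀ i, 0 ≤ t i := fun i => by
    refine Fin.cases ?_ (fun j => ?_) i
    · exact le_rfl
    · exact (hmem _).1
  have hstep : ∀ i : Fin 4, t i.castSucc ≤ t i.succ := by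
    intro i
    fin_cases i
    · exact (hmem _).1
    · exact hmono (show (0 : Fin 4) ≤ 1 by decide)
    · exact hmono (show (1 : Fin 4) ≤ 2 by decide)
    · exact hmono (show (2 : Fin 4) ≤ 3 by decide)
  refine ⟨(t, f ∘ t, g ∘ t), ⟨ht0, ?_, ?_, fun i => ?_, fun i => ?_, σ, fun i => ?_⟩, ?_⟩
  · simp [ht0, hf.1]
  · simp [ht0, hg.1]
  · have := hf.2 _ _ (hnn i.succ) (hnn i.castSucc)
    rwa [abs_of_nonneg (sub_nonneg.2 (hstep i))] at this
  · have := hg.2 _ _ (hnn i.succ) (hnn i.castSucc)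
    rwa [abs_of_nonneg (sub_nonneg.2 (hstep i)), one_mul] at this
  · exact (hmem (σ i)).2
  · rw [sumTimes_eq]
    exact Equiv.sum_comp σ τ

/-! ### Linear interpolation -/

/-- A piecewise linear function with prescribed slopes bounded by `α` belongs to `Strat α`. -/
lemma exists_interp {α t1 t2 t3 t4 m1 m2 m3 m4 : ℝ} (h1 : 0 ≤ t1) (h2 : t1 ≤ t2) (h3 : t2 ≤ t3)
    (h4 : t3 ≤ t4) (hm1 : |m1| ≤ α) (hm2 : |m2| ≤ α) (hm3 : |m3| ≤ α) (hm4 : |m4| ≤ α) :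
    ∃ f ∈ Strat α,
      (∀ s, 0 ≤ s → s ≤ t1 → f s = m1 * s) ∧
      (∀ s, t1 ≤ s → s ≤ t2 → f s = f t1 + m2 * (s - t1)) ∧
      (∀ s, t2 ≤ s → s ≤ t3 → f s = f t2 + m3 * (s - t2)) ∧
      (∀ s, t3 ≤ s → s ≤ t4 → f s = f t3 + m4 * (s - t3)) := by
  have hα : 0 ≤ α := (abs_nonneg _).trans hm1
  -- `c a b s` is the length of `[a, b] ∩ [0, s]`.
  let c : ℝ → ℝ → ℝ → ℝ := fun a b s => min s b - min s a
  have hc : ∀ a b, a ≤ b → ∀ s s', s ≤ s' → c a b s ≤ c a b s' := by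
    intro a b hab s s' hs
    simp only [c]
    rcases le_total s a with h | h <;> rcases le_total s b with h' | h' <;>
      rcases le_total s' a with k | k <;> rcases le_total s' b with k' | k' <;>
      simp only [min_eq_left, min_eq_right, h, h', k, k'] <;> linarith
  let F : ℝ → ℝ := fun s => m1 * c 0 t1 s + m2 * c t1 t2 s + m3 * c t2 t3 s + m4 * c t3 t4 s
  have hmon : ∀ s s', 0 ≤ s → s ≤ s' → |F s' - F s| ≤ α * (s' - s) := by
    intro s s' h0 hs
    have key : ∀ m a b, |m| ≤ α → a ≤ b →
        |m * (c a b s' - c a b s)| ≤ α * (c a b s' - c a b s) := by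
      intro m a b hm hab
      have := sub_nonneg.2 (hc a b hab s s' hs)
      rw [abs_mul, abs_of_nonneg this]
      exact mul_le_mul_of_nonneg_right hm this
    have k1 := abs_le.1 (key m1 0 t1 hm1 h1)
    have k2 := abs_le.1 (key m2 t1 t2 hm2 h2)
    have k3 := abs_le.1 (key m3 t2 t3 hm3 h3)
    have k4 := abs_le.1 (key m4 t3 t4 hm4 h4)
    have hsum : α * (c 0 t1 s' - c 0 t1 s) + α * (c t1 t2 s' - c t1 t2 s)
        + α * (c t2 t3 s' - c t2 t3 s) + α * (c t3 t4 s' - c t3 t4 s) ≤ α * (s' - s) := by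
      rw [← mul_add, ← mul_add, ← mul_add]
      refine mul_le_mul_of_nonneg_left ?_ hα
      simp only [c]
      rw [min_eq_right h0, min_eq_right (h0.trans hs)]
      have : min s' t4 - min s t4 ≤ s' - s := by
        rcases le_total s t4 with h | h <;> rcases le_total s' t4 with h' | h' <;>
          simp only [min_eq_left, min_eq_right, h, h'] <;> linarith
      linarith
    rw [abs_le]
    constructor <;> simp only [F] <;> linarith [k1.1, k1.2, k2.1, k2.2, k3.1, k3.2, k4.1, k4.2]
  have hc0 : ∀ a b s, s ≤ a → a ≤ b → c a b s = 0 := by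
    intro a b s h h'
    simp [c, min_eq_left h, min_eq_left (h.trans h')]
  have hc1 : ∀ a b s, a ≤ s → s ≤ b → c a b s = s - a := by
    intro a b s h h'
    simp [c, min_eq_left h', min_eq_right h]
  have hc2 : ∀ a b s, a ≤ b → b ≤ s → c a b s = b - a := by
    intro a b s h h'
    simp [c, min_eq_right h', min_eq_right (h.trans h')]
  refine ⟨F, ⟨?_, ?_⟩, ?_, ?_, ?_, ?_⟩
  · simp only [F]
    rw [hc0 0 t1 _ le_rfl h1, hc0 t1 t2 _ h1 h2, hc0 t2 t3 _ (by linarith) h3,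
      hc0 t3 t4 _ (by linarith) h4]
    ring
  · intro s t hs ht
    rcases le_total s t with h | h
    · rw [abs_sub_comm, abs_sub_comm s t, abs_of_nonneg (sub_nonneg.2 h)]
      exact hmon s t hs h
    · rw [abs_of_nonneg (sub_nonneg.2 h)]
      exact hmon t s ht h
  · intro s hs hs'
    simp only [F]
    rw [hc1 0 t1 s hs hs', hc0 t1 t2 s hs' h2, hc0 t2 t3 s (by linarith) h3,
      hc0 t3 t4 s (by linarith) h4]
    ring
  · intro s hs hs'
    simp only [F]
    rw [hc2 0 t1 s h1 hs, hc1 t1 t2 s hs hs', hc0 t2 t3 s hs' h3, hc0 t3 t4 s (by linarith) h4,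
      hc2 0 t1 t1 h1 le_rfl, hc0 t1 t2 t1 le_rfl h2, hc0 t2 t3 t1 h2 h3,
      hc0 t3 t4 t1 (by linarith) h4]
    ring
  · intro s hs hs'
    simp only [F]
    rw [hc2 0 t1 s h1 (by linarith), hc2 t1 t2 s h2 hs, hc1 t2 t3 s hs hs', hc0 t3 t4 s hs' h4,
      hc2 0 t1 t2 h1 h2, hc2 t1 t2 t2 h2 le_rfl, hc0 t2 t3 t2 le_rfl h3, hc0 t3 t4 t2 h3 h4]
    ring
  · intro s hs hs'
    simp only [F]
    rw [hc2 0 t1 s h1 (by linarith), hc2 t1 t2 s h2 (by linarith), hc2 t2 t3 s h3 hs,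
      hc1 t3 t4 s hs hs', hc2 0 t1 t3 h1 (by linarith), hc2 t1 t2 t3 h2 h3,
      hc2 t2 t3 t3 h3 le_rfl, hc0 t3 t4 t3 le_rfl h4]
    ring

/-! ### Existence of an optimal schedule -/

lemma IsSched.le {v : ℝ} {p} (hp : IsSched v p) (i : Fin 4) : p.1 i.castSucc ≤ p.1 i.succ :=
  sub_nonneg.1 ((abs_nonneg _).trans (hp.2.2.2.2.1 i))

lemma IsSched.bound {v : ℝ} (hv1 : v ≤ 1) {p} (hp : IsSched v p) (i : Fin 5) :
    0 ≤ p.1 i ∧ |p.2.1 i| ≤ p.1 i ∧ |p.2.2 i| ≤ p.1 i := by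
  induction i using Fin.induction with
  | zero => simp [hp.1, hp.2.1, hp.2.2.1]
  | succ i ih =>
    obtain ⟨h0, hx, hy⟩ := ih
    have hle := hp.le i
    have hX := hp.2.2.2.1 i
    have hY := hp.2.2.2.2.1 i
    have hX' := hX.trans (mul_le_of_le_one_left (sub_nonneg.2 hle) hv1)
    simp only [abs_le] at *
    refine ⟨by linarith, ?_, ?_⟩ <;> constructor <;> linarith

lemma IsSched.le_cost {v : ℝ} (hv1 : v ≤ 1) {p} (hp : IsSched v p) (i : Fin 5) :
    p.1 i ≤ schedCost p := by
  have hs : ∀ j : Fin 4, p.1 j.succ ≤ schedCost p := fun j =>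
    Finset.single_le_sum (f := fun j : Fin 4 => p.1 j.succ)
      (fun k _ => (hp.bound hv1 k.succ).1) (Finset.mem_univ j)
  refine Fin.cases ?_ hs i
  rw [hp.1]
  exact (hp.bound hv1 _).1.trans (hs 0)

lemma exists_sched {v : ℝ} (hv0 : 0 < v) : ∃ p, IsSched v p := by
  -- Player II stands still while player I visits `1`, `1`, `-1`, `-1`, one step taking time `2 / v`.
  refine ⟨(fun i => (2 / v) * (i : ℕ), ![0, 1, 1, -1, -1], fun _ => 0),
    by simp, by simp, by simp, fun i => ?_, fun i => ?_, 1, fun i => ?_⟩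
  · have h : v * (2 / v * ((i.succ : Fin 5) : ℕ) - 2 / v * ((i.castSucc : Fin 5) : ℕ)) = 2 := by
      simp only [Fin.val_succ, Fin.val_castSucc]
      push_cast
      field_simp
      ring
    simp only [h]
    fin_cases i <;> simp [abs_le]; norm_num
  · have h : 2 / v * ((i.succ : Fin 5) : ℕ) - 2 / v * ((i.castSucc : Fin 5) : ℕ) = 2 / v := by
      simp only [Fin.val_succ, Fin.val_castSucc]
      push_cast
      ring
    simp only [h, sub_self, abs_zero]
    positivity
  · fin_cases i <;> simp [agentO]

lemma isClosed_isSched (v : ℝ) : IsClosed {p | IsSched v p} := by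
  simp only [IsSched, ofPred_and, ofPred_forall, ofPred_exists]
  refine (isClosed_eq (by fun_prop) (by fun_prop)).inter
    ((isClosed_eq (by fun_prop) (by fun_prop)).inter
    ((isClosed_eq (by fun_prop) (by fun_prop)).inter
    ((isClosed_iInter fun i => isClosed_le (by fun_prop) (by fun_prop)).inter
    ((isClosed_iInter fun i => isClosed_le (by fun_prop) (by fun_prop)).inter
    (isClosed_iUnion_of_finite fun σ => isClosed_iInter fun i =>
      isClosed_eq (by fun_prop) (by fun_prop))))))

lemma exists_min_sched {v : ℝ} (hv0 : 0 < v) (hv1 : v ≤ 1) :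
    ∃ p, IsSched v p ∧ ∀ q, IsSched v q → schedCost p ≤ schedCost q := by
  obtain ⟨p₀, hp₀⟩ := exists_sched hv0
  have hcont : Continuous schedCost := by
    unfold schedCost
    fun_prop
  set M := schedCost p₀
  set K := {p | IsSched v p} ∩ {p | schedCost p ≤ M} with hK
  have hKc : IsCompact K := by
    refine (isCompact_Icc (a := ((fun _ => 0, fun _ => -M, fun _ => -M) :
      (Fin 5 → ℝ) × (Fin 5 → ℝ) × (Fin 5 → ℝ))) (b := (fun _ => M, fun _ => M, fun _ => M))
      ).of_isClosed_subset
      ((isClosed_isSched v).inter (isClosed_le hcont continuous_const)) ?_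
    rintro p ⟨hp, hpM⟩
    have hb := fun i => hp.bound hv1 i
    have hM : ∀ i, p.1 i ≤ M := fun i => (hp.le_cost hv1 i).trans hpM
    refine ⟨⟨fun i => (hb i).1, fun i => ?_, fun i => ?_⟩, hM, fun i => ?_, fun i => ?_⟩
    · exact (abs_le.1 ((hb i).2.1.trans (hM i))).1
    · exact (abs_le.1 ((hb i).2.2.trans (hM i))).1
    · exact (abs_le.1 ((hb i).2.1.trans (hM i))).2
    · exact (abs_le.1 ((hb i).2.2.trans (hM i))).2
  obtain ⟨p, hp, hmin⟩ := hKc.exists_isMinOn ⟨p₀, hp₀, le_refl M⟩ hcont.continuousOn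
  refine ⟨p, hp.1, fun q hq => ?_⟩
  rcases le_total (schedCost q) M with h | h
  · exact hmin ⟨hq, h⟩
  · exact le_trans hp.2 h

/-! ### Optimal schedules and full speed of player II -/

lemma exists_slope {α a d : ℝ} (hα : 0 ≤ α) (h : |a| ≤ α * d) (hd : 0 ≤ d) :
    ∃ m, |m| ≤ α ∧ a = m * d := by
  rcases hd.eq_or_lt with rfl | hd
  · exact ⟨0, by simpa using hα, by simpa using h⟩
  · refine ⟨a / d, ?_, by field_simp⟩
    rw [abs_div, abs_of_pos hd, div_le_iff₀ hd]
    exact h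

/-- In an optimal schedule player II moves at full speed during every step: otherwise the agent
of the `i`-th meeting could meet player I earlier on the latter's path and then accompany him. -/
lemma tight {v : ℝ} (hv0 : 0 < v) (hv1 : v ≤ 1) {p} (hp : IsSched v p)
    (hmin : ∀ q, IsSched v q → schedCost p ≤ schedCost q) (i : Fin 4) :
    |p.2.2 i.succ - p.2.2 i.castSucc| = p.1 i.succ - p.1 i.castSucc := by
  by_contra hne
  obtain ⟨t, x, y⟩ := p
  have hle := hp.le i
  obtain ⟨h0, hx0, hy0, hx, hy, σ, hσ⟩ := hp
  simp only at *
  have hlt := lt_of_le_of_ne (hy i) hne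
  obtain ⟨m, hm, hxm⟩ := exists_slope hv0.le (hx i) (sub_nonneg.2 hle)
  -- The meeting is advanced by `ε` along player I's straight path of slope `m`.
  obtain ⟨ε, hε⟩ : ∃ ε, ε = (t i.succ - t i.castSucc - |y i.succ - y i.castSucc|) / 2 := ⟨_, rfl⟩
  have hε0 : 0 < ε := by rw [hε]; linarith
  obtain ⟨b, hb⟩ : ∃ b, b = agentB (σ i) := ⟨_, rfl⟩
  have hbb : b * b = 1 := by rcases agentB_eq (σ i) with h | h <;> rw [hb, h] <;> norm_num
  have hbabs : |b| = 1 := by rcases agentB_eq (σ i) with h | h <;> rw [hb, h] <;> norm_num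
  have hmε : |m * ε| ≤ v * ε := by
    rw [abs_mul, abs_of_pos hε0]; exact mul_le_mul_of_nonneg_right hm hε0.le
  have hvε : v * ε ≤ ε := mul_le_of_le_one_left hε0.le hv1
  have hbmε : |b * (m * ε)| ≤ ε := by
    rw [abs_mul, hbabs, one_mul]; exact hmε.trans hvε
  have hne0 : ∀ j : Fin 4, (0 : Fin 5) ≠ j.succ := fun j => (Fin.succ_ne_zero j).symm
  have hcs : i.castSucc ≠ i.succ := Fin.castSucc_lt_succ.ne
  have hq := hmin (Function.update t i.succ (t i.succ - ε),
    Function.update x i.succ (x i.succ - m * ε),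
    Function.update y i.succ (y i.succ - b * (m * ε))) ?_
  · have hcost : schedCost (Function.update t i.succ (t i.succ - ε),
        Function.update x i.succ (x i.succ - m * ε),
        Function.update y i.succ (y i.succ - b * (m * ε))) < schedCost (t, x, y) := by
      refine Finset.sum_lt_sum (fun j _ => ?_) ⟨i, Finset.mem_univ _, ?_⟩
      · rcases eq_or_ne j i with rfl | hj
        · simp [hε0.le]
        · simp [hj]
      · simp [hε0]
    exact absurd hq (not_le.2 hcost)
  · refine ⟨?_, ?_, ?_, fun j => ?_, fun j => ?_, σ, fun j => ?_⟩
    · simpa [Function.update_of_ne (hne0 i)] using h0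
    · simpa [Function.update_of_ne (hne0 i)] using hx0
    · simpa [Function.update_of_ne (hne0 i)] using hy0
    · rcases eq_or_ne j i with rfl | hj
      · simp only [Function.update_self, Function.update_of_ne hcs]
        have e : x j.succ - m * ε - x j.castSucc = m * (t j.succ - ε - t j.castSucc) := by
          linear_combination hxm
        have : 0 ≤ t j.succ - ε - t j.castSucc := by
          have := abs_nonneg (y j.succ - y j.castSucc)
          linarith
        rw [e, abs_mul, abs_of_nonneg this]
        exact mul_le_mul_of_nonneg_right hm this
      · have hj' : j.succ ≠ i.succ := fun h => hj (Fin.succ_injective _ h)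
        by_cases hji : j.castSucc = i.succ
        · simp only [hji, Function.update_self, Function.update_of_ne hj']
          have h1 := abs_le.1 (hji ▸ hx j)
          have h2 := abs_le.1 hmε
          rw [abs_le]; constructor <;> linarith [h1.1, h1.2, h2.1, h2.2]
        · simp only [Function.update_of_ne hji, Function.update_of_ne hj']
          exact hx j
    · rcases eq_or_ne j i with rfl | hj
      · simp only [Function.update_self, Function.update_of_ne hcs]
        have h1 := abs_le.1 (le_refl |y j.succ - y j.castSucc|)
        have h2 := abs_le.1 hbmε
        rw [abs_le]; constructor <;> linarith [h1.1, h1.2, h2.1, h2.2]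
      · have hj' : j.succ ≠ i.succ := fun h => hj (Fin.succ_injective _ h)
        by_cases hji : j.castSucc = i.succ
        · simp only [hji, Function.update_self, Function.update_of_ne hj']
          have h1 := abs_le.1 (hji ▸ hy j)
          have h2 := abs_le.1 hbmε
          rw [abs_le]; constructor <;> linarith [h1.1, h1.2, h2.1, h2.2]
        · simp only [Function.update_of_ne hji, Function.update_of_ne hj']
          exact hy j
    · rcases eq_or_ne j i with rfl | hj
      · simp only [Function.update_self]
        rw [hσ j, ← hb]
        linear_combination m * ε * hbb
      · have hj' : j.succ ≠ i.succ := fun h => hj (Fin.succ_injective _ h)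
        simp only [Function.update_of_ne hj']
        exact hσ j

/-- An optimal schedule is realised by a pair of the canonical form, whose rendezvous times are
exactly the scheduled ones. -/
lemma exists_canonical {v : ℝ} (hv0 : 0 < v) (hv1 : v ≤ 1) {p} (hp : IsSched v p)
    (hmin : ∀ q, IsSched v q → schedCost p ≤ schedCost q) :
    ∃ f ∈ Strat v, ∃ g ∈ Strat 1, AllFinite f g ∧ PLWitness v f g ∧
      sumTimes f g = schedCost p := by
  have htight := tight hv0 hv1 hp hmin
  have hle := hp.le
  have hbound := hp.bound hv1
  obtain ⟨t, x, y⟩ := p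
  obtain ⟨h0, hx0, hy0, hx, hy, σ, hσ⟩ := hp
  simp only at *
  choose m hm hxm using fun i => exists_slope hv0.le (hx i) (sub_nonneg.2 (hle i))
  have hd : ∀ i : Fin 4, ∃ d : ℝ, (d = 1 ∨ d = -1) ∧
      y i.succ - y i.castSucc = d * (t i.succ - t i.castSucc) := by
    intro i
    rcases abs_choice (y i.succ - y i.castSucc) with h | h
    · exact ⟨1, Or.inl rfl, by rw [← htight i, h]; ring⟩
    · exact ⟨-1, Or.inr rfl, by rw [← htight i, h]; ring⟩
  choose d hd hyd using hd
  have hd1 : ∀ i, |d i| ≤ 1 := fun i => by rcases hd i with h | h <;> simp [h]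
  have e01 : 0 ≤ t 1 := (hbound 1).1
  have e12 : t 1 ≤ t 2 := hle 1
  have e23 : t 2 ≤ t 3 := hle 2
  have e34 : t 3 ≤ t 4 := hle 3
  obtain ⟨f, hf, f1, f2, f3, f4⟩ := exists_interp e01 e12 e23 e34 (hm 0) (hm 1) (hm 2) (hm 3)
  obtain ⟨g, hg, g1, g2, g3, g4⟩ := exists_interp e01 e12 e23 e34 (hd1 0) (hd1 1) (hd1 2) (hd1 3)
  have hx1 : x 1 - x 0 = m 0 * (t 1 - t 0) := hxm 0
  have hx2 : x 2 - x 1 = m 1 * (t 2 - t 1) := hxm 1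
  have hx3 : x 3 - x 2 = m 2 * (t 3 - t 2) := hxm 2
  have hx4 : x 4 - x 3 = m 3 * (t 4 - t 3) := hxm 3
  have hy1 : y 1 - y 0 = d 0 * (t 1 - t 0) := hyd 0
  have hy2 : y 2 - y 1 = d 1 * (t 2 - t 1) := hyd 1
  have hy3 : y 3 - y 2 = d 2 * (t 3 - t 2) := hyd 2
  have hy4 : y 4 - y 3 = d 3 * (t 4 - t 3) := hyd 3
  rw [h0, hx0] at hx1
  rw [h0, hy0] at hy1
  have fx1 : f (t 1) = x 1 := by rw [f1 _ e01 le_rfl]; linarith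
  have fx2 : f (t 2) = x 2 := by rw [f2 _ e12 le_rfl]; linarith
  have fx3 : f (t 3) = x 3 := by rw [f3 _ e23 le_rfl]; linarith
  have fx4 : f (t 4) = x 4 := by rw [f4 _ e34 le_rfl]; linarith
  have gy1 : g (t 1) = y 1 := by rw [g1 _ e01 le_rfl]; linarith
  have gy2 : g (t 2) = y 2 := by rw [g2 _ e12 le_rfl]; linarith
  have gy3 : g (t 3) = y 3 := by rw [g3 _ e23 le_rfl]; linarith
  have gy4 : g (t 4) = y 4 := by rw [g4 _ e34 le_rfl]; linarith
  have hfx : ∀ i : Fin 4, f (t i.succ) = x i.succ := by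
    intro i; fin_cases i
    exacts [fx1, fx2, fx3, fx4]
  have hgy : ∀ i : Fin 4, g (t i.succ) = y i.succ := by
    intro i; fin_cases i
    exacts [gy1, gy2, gy3, gy4]
  have hmeet : ∀ i : Fin 4, t i.succ ∈ meetSet f g (agentO (σ i)) (agentB (σ i)) := fun i =>
    ⟨(hbound _).1, by rw [hfx, hgy]; exact hσ i⟩
  have hfin : AllFinite f g := by
    rw [allFinite_iff]
    intro j
    have := hmeet (σ.symm j)
    rw [Equiv.apply_symm_apply] at this
    exact ⟨_, this⟩
  have hsum : sumTimes f g = ∑ i, meetTime f g (agentO (σ i)) (agentB (σ i)) := by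
    rw [sumTimes_eq]
    exact (Equiv.sum_comp σ fun j => meetTime f g (agentO j) (agentB j)).symm
  have hle' : ∀ i ∈ (Finset.univ : Finset (Fin 4)),
      meetTime f g (agentO (σ i)) (agentB (σ i)) ≤ t i.succ := fun i _ => meetTime_le (hmeet i)
  have hcost : sumTimes f g = ∑ i : Fin 4, t i.succ := by
    refine le_antisymm (hsum ▸ Finset.sum_le_sum hle') ?_
    obtain ⟨q, hq, hqc⟩ := exists_sched_of_strat hf hg hfin
    rw [← hqc]
    exact hmin q hq
  -- The actual times are bounded by the scheduled ones and have the same sum.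
  have heq : ∀ i, meetTime f g (agentO (σ i)) (agentB (σ i)) = t i.succ := fun i =>
    (Finset.sum_eq_sum_iff_of_le hle').1 (hsum.symm.trans hcost) i (Finset.mem_univ i)
  refine ⟨f, hf, g, hg, hfin, ⟨t 1, t 2, t 3, t 4, m 0, m 1, m 2, m 3, d 0, d 1, d 2, d 3,
    e01, e12, e23, e34, ?_, abs_le.1 (hm 0), abs_le.1 (hm 1), abs_le.1 (hm 2), abs_le.1 (hm 3),
    hd 0, hd 1, hd 2, hd 3, f1, f2, f3, f4, g1, g2, g3, g4⟩, hcost⟩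
  have h : timesMultiset f g =
      Multiset.map (fun i : Fin 4 => t i.succ) (Finset.univ : Finset (Fin 4)).val := by
    have hσu := Multiset.map_univ_val_equiv σ
    rw [timesMultiset_eq]
    conv_lhs => rw [← hσu, Multiset.map_map]
    exact Multiset.map_congr rfl fun i _ => heq i
  rw [h]
  rfl

/-! ### The rendezvous value -/

/-- The rendezvous value is unchanged when the infimum is restricted to pairs of the
canonical piecewise-linear form, and the restricted infimum is attained. -/
theorem rendezvous_value_piecewise_linear (v : ℝ) (hv0 : 0 < v) (hv1 : v ≤ 1) :
    V v = sInf {S | ∃ f ∈ Strat v, ∃ g ∈ Strat 1,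
        AllFinite f g ∧ PLWitness v f g ∧ S = sumTimes f g} ∧
      ∃ f ∈ Strat v, ∃ g ∈ Strat 1, AllFinite f g ∧ PLWitness v f g ∧ sumTimes f g = V v := by
  obtain ⟨p, hp, hmin⟩ := exists_min_sched hv0 hv1
  obtain ⟨f, hf, g, hg, hfin, hPL, hcost⟩ := exists_canonical hv0 hv1 hp hmin
  have hlow : ∀ f' ∈ Strat v, ∀ g' ∈ Strat 1, AllFinite f' g' → sumTimes f g ≤ sumTimes f' g' := by
    intro f' hf' g' hg' hfin'
    obtain ⟨q, hq, hqc⟩ := exists_sched_of_strat hf' hg' hfin'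
    rw [hcost, ← hqc]
    exact hmin q hq
  have hV : V v = sumTimes f g := by
    refine IsLeast.csInf_eq ⟨⟨f, hf, g, hg, hfin, rfl⟩, ?_⟩
    rintro S ⟨f', hf', g', hg', hfin', rfl⟩
    exact hlow f' hf' g' hg' hfin'
  refine ⟨?_, f, hf, g, hg, hfin, hPL, hV.symm⟩
  rw [hV]
  symm
  refine IsLeast.csInf_eq ⟨⟨f, hf, g, hg, hfin, hPL, rfl⟩, ?_⟩
  rintro S ⟨f', hf', g', hg', hfin', -, rfl⟩
  exact hlow f' hf' g' hg' hfin'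
end

section
/- Wait-for-mummy upper bound: for every v ∈ [0,1] there exist f ∈ F(v) and g ∈ F(1) whose four rendezvous times, arranged in increasing order, are exactly 1, 1, (3+v)/(1+v), and (v²+8v+3)/(1+v)². Consequently V(v) ≤ (4v²+16v+8)/(1+v)² for every v ∈ [0,1]. -/
/-!
Player II walks forward at full speed until time `1` and then turns back for good:
`g t = min t (2 - t)`. Player I waits at the origin until time `1`, then walks in the
positive direction at speed `v` until time `T = (3 + v) / (1 + v)`, and then reverses for good.

At time `1` both agents of player II that face the origin arrive there, so they meet player I
simultaneously. The agent that started at `1` facing away is at `3 - t` for `t ≥ 1`, and meets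
player I when `v (t - 1) = 3 - t`, that is at `T`, at the position `2 v / (1 + v)`. The last agent
is then at the mirror image `-2 v / (1 + v)`; the gap `4 v / (1 + v)` closes at speed `1 + v`,
so the last meeting takes place at time `T + 4 v / (1 + v)²`.
The bound on `V v` follows by summing the four times, as `V v` is an infimum of nonnegative sums.
-/

open Set

/-- Trajectory of player I: wait until time `1`, move forward at speed `v` until time `T`, then
move backward at speed `v`. -/
noncomputable def waitPath (v T t : ℝ) : ℝ := v * min (max 0 (t - 1)) (2 * T - 1 - t)

/-- Trajectory of player II: move forward until time `1`, then backward, at unit speed. -/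
noncomputable def turnPath (t : ℝ) : ℝ := min t (2 - t)

lemma waitPath_mem {v T : ℝ} (hv : 0 ≤ v) (hT : 1 ≤ T) : waitPath v T ∈ Strat v := by
  refine ⟨?_, fun s t _ _ => ?_⟩
  · have h : min (max 0 ((0 : ℝ) - 1)) (2 * T - 1 - 0) = 0 := by
      rw [max_eq_left (by norm_num), min_eq_left (by linarith)]
    rw [waitPath, h, mul_zero]
  · unfold waitPath
    rw [← mul_sub, abs_mul, abs_of_nonneg hv]
    refine mul_le_mul_of_nonneg_left ?_ hv
    refine (abs_min_sub_min_le_max _ _ _ _).trans (max_le ?_ ?_)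
    · refine (abs_max_sub_max_le_max _ _ _ _).trans (max_le ?_ ?_)
      · simp
      · apply le_of_eq; congr 1; ring
    · rw [abs_sub_comm s t]
      apply le_of_eq; congr 1; ring

lemma turnPath_mem : turnPath ∈ Strat 1 := by
  refine ⟨by simp [turnPath], fun s t _ _ => ?_⟩
  rw [one_mul]
  refine (abs_min_sub_min_le_max _ _ _ _).trans (max_le le_rfl ?_)
  rw [abs_sub_comm s t]
  apply le_of_eq; congr 1; ring

lemma waitPath_wait {v T t : ℝ} (hT : 1 ≤ T) (ht : t ≤ 1) : waitPath v T t = 0 := by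
  unfold waitPath
  rw [max_eq_left (by linarith), min_eq_left (by linarith), mul_zero]

lemma waitPath_out {v T t : ℝ} (ht : 1 ≤ t) (htT : t ≤ T) :
    waitPath v T t = v * (t - 1) := by
  unfold waitPath
  rw [max_eq_right (by linarith), min_eq_left (by linarith)]

lemma waitPath_back {v T t : ℝ} (hT : 1 ≤ T) (htT : T ≤ t) :
    waitPath v T t = v * (2 * T - 1 - t) := by
  unfold waitPath
  rw [max_eq_right (by linarith), min_eq_right (by linarith)]

lemma turnPath_of_le {t : ℝ} (ht : t ≤ 1) : turnPath t = t := min_eq_left (by linarith)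

lemma turnPath_of_ge {t : ℝ} (ht : 1 ≤ t) : turnPath t = 2 - t := min_eq_right (by linarith)

/-- The agent that starts at `1` and faces away from player I is first met at time `T`. -/
lemma isLeast_away_right {v T : ℝ} (hv : 0 ≤ v) (hT1 : 1 ≤ T) (hT : T * (1 + v) = 3 + v) :
    IsLeast (meetSet (waitPath v T) turnPath 1 1) T := by
  refine ⟨⟨by linarith, ?_⟩, ?_⟩
  · rw [waitPath_out hT1 le_rfl, turnPath_of_ge hT1]; linarith
  · rintro t ⟨h0, h⟩
    by_contra! hlt
    rcases le_total t 1 with h1 | h1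
    · rw [waitPath_wait hT1 h1, turnPath_of_le h1] at h; linarith
    · rw [waitPath_out h1 hlt.le, turnPath_of_ge h1] at h
      nlinarith

/-- The agent that starts at `1` and faces player I is first met at time `1`. -/
lemma isLeast_facing_right {v T : ℝ} (hT1 : 1 ≤ T) :
    IsLeast (meetSet (waitPath v T) turnPath 1 (-1)) 1 := by
  refine ⟨⟨by linarith, ?_⟩, ?_⟩
  · rw [waitPath_wait hT1 le_rfl, turnPath_of_le le_rfl]; norm_num
  · rintro t ⟨h0, h⟩
    by_contra! hlt
    rw [waitPath_wait hT1 hlt.le, turnPath_of_le hlt.le] at h; linarith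

/-- The agent that starts at `-1` and faces player I is first met at time `1`. -/
lemma isLeast_facing_left {v T : ℝ} (hT1 : 1 ≤ T) :
    IsLeast (meetSet (waitPath v T) turnPath (-1) 1) 1 := by
  refine ⟨⟨by linarith, ?_⟩, ?_⟩
  · rw [waitPath_wait hT1 le_rfl, turnPath_of_le le_rfl]; norm_num
  · rintro t ⟨h0, h⟩
    by_contra! hlt
    rw [waitPath_wait hT1 hlt.le, turnPath_of_le hlt.le] at h; linarith

/-- The agent that starts at `-1` and faces away from player I is first met at the time `S` at
which, after the reversal at time `T`, the two trajectories cross. -/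
lemma isLeast_away_left {v T S : ℝ} (hv : 0 ≤ v) (hT1 : 1 ≤ T) (hT : T * (1 + v) = 3 + v)
    (hTS : T ≤ S) (hS : S * (1 + v) = 3 + v * (2 * T - 1)) :
    IsLeast (meetSet (waitPath v T) turnPath (-1) (-1)) S := by
  refine ⟨⟨by linarith, ?_⟩, ?_⟩
  · rw [waitPath_back hT1 hTS, turnPath_of_ge (hT1.trans hTS)]; linarith
  · rintro t ⟨h0, h⟩
    by_contra! hlt
    rcases le_total t 1 with h1 | h1
    · rw [waitPath_wait hT1 h1, turnPath_of_le h1] at h; linarith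
    rcases lt_or_ge t T with h2 | h2
    · -- Before time `T ≤ 3` the agent, at `t - 3`, is on the negative side of the origin.
      rw [waitPath_out h1 h2.le, turnPath_of_ge h1] at h
      have : 0 ≤ v * (t - 1) := mul_nonneg hv (by linarith)
      have : 0 ≤ v * (T - 1) := mul_nonneg hv (by linarith)
      linarith
    · rw [waitPath_back hT1 h2, turnPath_of_ge h1] at h
      nlinarith

lemma meetTime_nonneg (f g : ℝ → ℝ) (o b : ℝ) : 0 ≤ meetTime f g o b :=
  Real.sInf_nonneg fun _ h => h.1

lemma V_le_sumTimes {v : ℝ} {f g : ℝ → ℝ} (hf : f ∈ Strat v) (hg : g ∈ Strat 1)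
    (h : AllFinite f g) : V v ≤ sumTimes f g := by
  refine csInf_le ⟨0, ?_⟩ ⟨f, hf, g, hg, h, rfl⟩
  rintro _ ⟨f, -, g, -, -, rfl⟩
  have := meetTime_nonneg f g
  unfold sumTimes
  linarith [this 1 1, this 1 (-1), this (-1) 1, this (-1) (-1)]

/-- Wait-for-mummy upper bound: there is a pair of strategies whose four rendezvous
times, in increasing order, are exactly `1, 1, (3 + v)/(1 + v), (v² + 8v + 3)/(1 + v)²`;
consequently `V v ≤ (4v² + 16v + 8)/(1 + v)²`. -/
theorem wait_for_mummy_upper_bound (v : ℝ) (hv : v ∈ Icc (0 : ℝ) 1) :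
    (∃ f ∈ Strat v, ∃ g ∈ Strat 1, AllFinite f g ∧
      timesMultiset f g =
        {1, 1, (3 + v) / (1 + v), (v ^ 2 + 8 * v + 3) / (1 + v) ^ 2}) ∧
    V v ≤ (4 * v ^ 2 + 16 * v + 8) / (1 + v) ^ 2 := by
  have hv0 : 0 ≤ v := hv.1
  have hpos : 0 < 1 + v := by linarith
  obtain ⟨T, hTdef⟩ : ∃ T, T = (3 + v) / (1 + v) := ⟨_, rfl⟩
  obtain ⟨S, hSdef⟩ : ∃ S, S = (v ^ 2 + 8 * v + 3) / (1 + v) ^ 2 := ⟨_, rfl⟩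
  have hT : T * (1 + v) = 3 + v := by rw [hTdef]; field_simp
  have hT1 : 1 ≤ T := by rw [hTdef, le_div_iff₀ hpos]; linarith
  have hTS : T ≤ S := by
    have : S - T = 4 * v / (1 + v) ^ 2 := by rw [hSdef, hTdef]; field_simp; ring
    have : 0 ≤ 4 * v / (1 + v) ^ 2 := by positivity
    linarith
  have hS : S * (1 + v) = 3 + v * (2 * T - 1) := by rw [hSdef, hTdef]; field_simp; ring
  have l1 := isLeast_away_right hv0 hT1 hT
  have l2 := isLeast_facing_right (v := v) hT1
  have l3 := isLeast_facing_left (v := v) hT1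
  have l4 := isLeast_away_left hv0 hT1 hT hTS hS
  have hf := waitPath_mem hv0 hT1
  have hfin : AllFinite (waitPath v T) turnPath :=
    ⟨l1.nonempty, l2.nonempty, l3.nonempty, l4.nonempty⟩
  refine ⟨⟨_, hf, _, turnPath_mem, hfin, ?_⟩, ?_⟩
  · unfold timesMultiset meetTime
    rw [l1.csInf_eq, l2.csInf_eq, l3.csInf_eq, l4.csInf_eq, ← hTdef, ← hSdef]
    simp only [Multiset.insert_eq_cons]
    rw [Multiset.cons_swap T 1, Multiset.cons_swap T 1]
  · refine (V_le_sumTimes hf turnPath_mem hfin).trans (le_of_eq ?_)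
    unfold sumTimes meetTime
    rw [l1.csInf_eq, l2.csInf_eq, l3.csInf_eq, l4.csInf_eq, hTdef, hSdef]
    field_simp
    ring
end

section
/- Moving-strategy upper bound: for every v ∈ [0,1] there exist f ∈ F(v) and g ∈ F(1) whose four rendezvous times, arranged in increasing order, are exactly 1/(v+1), (3v+1)/(v+1)², (5v+3)/(v+1)², and (7v²+14v+3)/(1+v)³. Consequently V(v) ≤ (16v²+28v+8)/(1+v)³ for every v ∈ [0,1]. -/
/-!
Both players zigzag at full speed, and each phase of the motion is a head-on approach (closing
speed `1 + v`) to exactly one of the four agents of player II. Player I turns at the first three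
meetings `a ≤ b ≤ c`; player II turns only at `b`. The agents are met in the order
`(1, -1)`, `(-1, 1)`, `(1, 1)`, `(-1, -1)`, the gaps being closed in the four phases having
lengths `1`, `2 * v * a`, `2` and `2 * b - (1 - v) * (c - b)`. Dividing by `1 + v` gives the recursion
collected in `Times`, and solving it gives the four times of the theorem. It remains to check that
no agent is met before its own phase ends (`isLeast_meet₁` to `isLeast_meet₄`): until then the
agent stays strictly on its initial side of player I, and the linear motion within each phase
makes this a comparison at the phase's endpoints.
-/

open Set

/-- The zigzag of player I with speed `v`: it starts to the right and turns at `a`, `b` and `c`.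
After `c` it keeps moving left forever. -/
noncomputable def zigzag (v a b c t : ℝ) : ℝ :=
  v * (t - 2 * max (t - a) 0 + 2 * max (t - b) 0 - 2 * max (t - c) 0)

/-- The trajectory of player II: forward at unit speed until `b`, backward ever after. -/
noncomputable def turnBack (b t : ℝ) : ℝ := t - 2 * max (t - b) 0

/-- The recursion for the meeting times `a ≤ b ≤ c ≤ d`: each duration times the closing speed
`1 + v` is the gap between player I and the next agent at the start of the phase. -/
structure Times (v a b c d : ℝ) : Prop where
  v_nonneg : 0 ≤ v
  v_le : v ≤ 1
  a_pos : 0 < a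
  ab : a ≤ b
  bc : b < c
  cd : c ≤ d
  eq_a : a * (1 + v) = 1
  eq_b : (b - a) * (1 + v) = 2 * (v * a)
  eq_c : (c - b) * (1 + v) = 2
  eq_d : (d - c) * (1 + v) = 2 * b - (1 - v) * (c - b)

lemma times_explicit {v : ℝ} (h0 : 0 ≤ v) (h1 : v ≤ 1) :
    Times v (1 / (v + 1)) ((3 * v + 1) / (v + 1) ^ 2) ((5 * v + 3) / (v + 1) ^ 2)
      ((7 * v ^ 2 + 14 * v + 3) / (1 + v) ^ 3) := by
  have hp : 0 < v + 1 := by linarith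
  have hp' : 0 < 1 + v := by linarith
  have hab : (3 * v + 1) / (v + 1) ^ 2 - 1 / (v + 1) = 2 * v / (v + 1) ^ 2 := by
    field_simp; ring
  have hbc : (5 * v + 3) / (v + 1) ^ 2 - (3 * v + 1) / (v + 1) ^ 2 = 2 / (v + 1) := by
    field_simp; ring
  have hcd : (7 * v ^ 2 + 14 * v + 3) / (1 + v) ^ 3 - (5 * v + 3) / (v + 1) ^ 2
      = (2 * v ^ 2 + 6 * v) / (1 + v) ^ 3 := by
    rw [add_comm v 1]; field_simp; ring
  have pab : 0 ≤ 2 * v / (v + 1) ^ 2 := by positivity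
  have pbc : 0 < 2 / (v + 1) := by positivity
  have pcd : 0 ≤ (2 * v ^ 2 + 6 * v) / (1 + v) ^ 3 := by positivity
  refine ⟨h0, h1, by positivity, by linarith, by linarith, by linarith, ?_, ?_, ?_, ?_⟩
  · field_simp; ring
  · rw [hab]; field_simp; ring
  · rw [hbc]; field_simp; ring
  · rw [hcd, hbc, add_comm v 1]; field_simp; ring

lemma zigzag_mem {v a b c : ℝ} (hv : 0 ≤ v) (ha : 0 ≤ a) (hab : a ≤ b) (hbc : b ≤ c) :
    zigzag v a b c ∈ Strat v := by
  refine ⟨?_, fun s t _ _ => ?_⟩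
  · simp [zigzag, ha, ha.trans hab, (ha.trans hab).trans hbc]
  · rw [zigzag, zigzag, ← mul_sub, abs_mul, abs_of_nonneg hv]
    refine mul_le_mul_of_nonneg_left ?_ hv
    wlog hst : s ≤ t generalizing s t
    · rw [abs_sub_comm, abs_sub_comm s t]
      exact this t s ‹_› ‹_› (le_of_not_ge hst)
    rw [abs_sub_comm s t, abs_of_nonneg (sub_nonneg.2 hst), abs_le]
    rcases max_cases (s - a) 0 with h1 | h1 <;> rcases max_cases (s - b) 0 with h2 | h2 <;>
    rcases max_cases (s - c) 0 with h3 | h3 <;> rcases max_cases (t - a) 0 with h4 | h4 <;>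
    rcases max_cases (t - b) 0 with h5 | h5 <;> rcases max_cases (t - c) 0 with h6 | h6 <;>
    constructor <;> linarith

lemma turnBack_mem {b : ℝ} (hb : 0 ≤ b) : turnBack b ∈ Strat 1 := by
  refine ⟨by simp [turnBack, hb], fun s t _ _ => ?_⟩
  rw [turnBack, turnBack, one_mul]
  wlog hst : s ≤ t generalizing s t
  · rw [abs_sub_comm, abs_sub_comm s t]
    exact this t s ‹_› ‹_› (le_of_not_ge hst)
  rw [abs_sub_comm s t, abs_of_nonneg (sub_nonneg.2 hst), abs_le]
  rcases max_cases (s - b) 0 with h1 | h1 <;> rcases max_cases (t - b) 0 with h2 | h2 <;>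
  constructor <;> linarith

section Phases

variable {v a b c d t : ℝ}

lemma zigzag_phase₁ (h : Times v a b c d) (ht : t ≤ a) : zigzag v a b c t = v * t := by
  have := h.ab; have := h.bc
  rw [zigzag, max_eq_right (by linarith), max_eq_right (by linarith), max_eq_right (by linarith)]
  ring

lemma zigzag_phase₂ (h : Times v a b c d) (h1 : a ≤ t) (h2 : t ≤ b) :
    zigzag v a b c t = v * a - v * (t - a) := by
  have := h.bc
  rw [zigzag, max_eq_left (by linarith), max_eq_right (by linarith), max_eq_right (by linarith)]
  ring

lemma zigzag_phase₃ (h : Times v a b c d) (h1 : b ≤ t) (h2 : t ≤ c) :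
    zigzag v a b c t = b - 1 + v * (t - b) := by
  have := h.ab
  rw [zigzag, max_eq_left (by linarith), max_eq_left (by linarith), max_eq_right (by linarith)]
  linear_combination -h.eq_a - h.eq_b

lemma zigzag_phase₄ (h : Times v a b c d) (h1 : c ≤ t) :
    zigzag v a b c t = b - 1 + v * (c - b) - v * (t - c) := by
  have := h.ab; have := h.bc
  rw [zigzag, max_eq_left (by linarith), max_eq_left (by linarith), max_eq_left (by linarith)]
  linear_combination -h.eq_a - h.eq_b

lemma turnBack_before (ht : t ≤ b) : turnBack b t = t := by
  rw [turnBack, max_eq_right (by linarith)]; ring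

lemma turnBack_after (ht : b ≤ t) : turnBack b t = 2 * b - t := by
  rw [turnBack, max_eq_left (by linarith)]; ring

/-- The agent `(1, 1)` is met at `c`: it runs away to the right until `b`, and approaches
player I head-on afterwards. -/
lemma isLeast_meet₁ (h : Times v a b c d) :
    IsLeast (meetSet (zigzag v a b c) (turnBack b) 1 1) c := by
  have h0 := h.v_nonneg; have h1 := h.v_le; have ha := h.a_pos; have hab := h.ab
  have hbc := h.bc; have ec := h.eq_c
  refine ⟨⟨by linarith, ?_⟩, fun t ⟨ht0, ht⟩ => ?_⟩
  · rw [zigzag_phase₃ h hbc.le le_rfl, turnBack_after hbc.le]; linarith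
  by_contra! hlt
  rcases le_total t b with htb | htb
  · rw [turnBack_before htb] at ht
    rcases le_total t a with hta | hta
    · rw [zigzag_phase₁ h hta] at ht; nlinarith
    · rw [zigzag_phase₂ h hta htb] at ht; nlinarith
  · rw [turnBack_after htb, zigzag_phase₃ h htb hlt.le] at ht; nlinarith

/-- The agent `(1, -1)` is met at `a`, the two approaching each other from the start. -/
lemma isLeast_meet₂ (h : Times v a b c d) :
    IsLeast (meetSet (zigzag v a b c) (turnBack b) 1 (-1)) a := by
  have h0 := h.v_nonneg; have ha := h.a_pos; have hab := h.ab; have ea := h.eq_a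
  refine ⟨⟨ha.le, ?_⟩, fun t ⟨ht0, ht⟩ => ?_⟩
  · rw [zigzag_phase₁ h le_rfl, turnBack_before hab]; linarith
  by_contra! hlt
  rw [turnBack_before (by linarith), zigzag_phase₁ h hlt.le] at ht
  nlinarith

/-- The agent `(-1, 1)` is met at `b`: before `a ≤ 1` it is still to the left of the origin,
while player I is not, and they approach each other head-on afterwards. -/
lemma isLeast_meet₃ (h : Times v a b c d) :
    IsLeast (meetSet (zigzag v a b c) (turnBack b) (-1) 1) b := by
  have h0 := h.v_nonneg; have h1 := h.v_le; have ha := h.a_pos; have hab := h.ab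
  have hbc := h.bc; have ea := h.eq_a; have eb := h.eq_b
  refine ⟨⟨by linarith, ?_⟩, fun t ⟨ht0, ht⟩ => ?_⟩
  · rw [zigzag_phase₃ h le_rfl hbc.le, turnBack_before le_rfl]; ring
  by_contra! hlt
  rw [turnBack_before hlt.le] at ht
  rcases le_or_gt a t with hta | hta
  · rw [zigzag_phase₂ h hta hlt.le] at ht; nlinarith
  · rw [zigzag_phase₁ h hta.le] at ht; nlinarith

/-- The agent `(-1, -1)` is met at `d`: it runs away to the left until `b`, then follows player I
without catching up before `c`, and approaches head-on afterwards. -/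
lemma isLeast_meet₄ (h : Times v a b c d) :
    IsLeast (meetSet (zigzag v a b c) (turnBack b) (-1) (-1)) d := by
  have h0 := h.v_nonneg; have h1 := h.v_le; have ha := h.a_pos; have hab := h.ab
  have hbc := h.bc; have hcd := h.cd; have ed := h.eq_d
  refine ⟨⟨by linarith, ?_⟩, fun t ⟨ht0, ht⟩ => ?_⟩
  · rw [zigzag_phase₄ h hcd, turnBack_after (by linarith)]; linarith
  by_contra! hlt
  rcases le_total t b with htb | htb
  · rw [turnBack_before htb] at ht
    rcases le_total t a with hta | hta
    · rw [zigzag_phase₁ h hta] at ht; nlinarith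
    · rw [zigzag_phase₂ h hta htb] at ht; nlinarith
  · rw [turnBack_after htb] at ht
    rcases le_or_gt c t with htc | htc
    · rw [zigzag_phase₄ h htc] at ht; nlinarith
    · rw [zigzag_phase₃ h htb htc.le] at ht
      -- The gap at `t` is the gap `(d - c) * (1 + v)` at `c` plus `(1 - v) * (c - t)`.
      have e : (d - c) * (1 + v) + (1 - v) * (c - t) = 0 := by linarith
      have p1 : 0 ≤ (d - c) * (1 + v) := mul_nonneg (by linarith) (by linarith)
      have p2 : 0 ≤ (1 - v) * (c - t) := mul_nonneg (by linarith) (by linarith)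
      -- Both summands vanish only if `v = 1`, but then the gap at `c` is `2 * b > 0`.
      have p3 : (1 - v) * (c - t) = 0 := by linarith
      have p4 : (d - c) * (1 + v) = 0 := by linarith
      have hv1 : v = 1 := by
        rcases mul_eq_zero.1 p3 with h' | h' <;> linarith
      subst hv1
      have := h.eq_b
      linarith

end Phases

/-- Moving-strategy upper bound: there is a pair of strategies whose four rendezvous
times, in increasing order, are exactly `1/(v+1), (3v+1)/(v+1)², (5v+3)/(v+1)²,
(7v²+14v+3)/(1+v)³`; consequently `V v ≤ (16v² + 28v + 8)/(1 + v)³`. -/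
theorem moving_strategy_upper_bound (v : ℝ) (hv : v ∈ Icc (0 : ℝ) 1) :
    (∃ f ∈ Strat v, ∃ g ∈ Strat 1, AllFinite f g ∧
      timesMultiset f g =
        {1 / (v + 1), (3 * v + 1) / (v + 1) ^ 2, (5 * v + 3) / (v + 1) ^ 2,
          (7 * v ^ 2 + 14 * v + 3) / (1 + v) ^ 3}) ∧
    V v ≤ (16 * v ^ 2 + 28 * v + 8) / (1 + v) ^ 3 := by
  obtain ⟨h0, h1⟩ := hv
  have h := times_explicit h0 h1
  have hp : 0 < 1 + v := by linarith
  set a := 1 / (v + 1) with ha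
  set b := (3 * v + 1) / (v + 1) ^ 2 with hb
  set c := (5 * v + 3) / (v + 1) ^ 2 with hc
  set d := (7 * v ^ 2 + 14 * v + 3) / (1 + v) ^ 3 with hd
  have m₁ : meetTime _ _ _ _ = c := (isLeast_meet₁ h).csInf_eq
  have m₂ : meetTime _ _ _ _ = a := (isLeast_meet₂ h).csInf_eq
  have m₃ : meetTime _ _ _ _ = b := (isLeast_meet₃ h).csInf_eq
  have m₄ : meetTime _ _ _ _ = d := (isLeast_meet₄ h).csInf_eq
  have hf := zigzag_mem h.v_nonneg h.a_pos.le h.ab h.bc.le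
  have hg := turnBack_mem (h.a_pos.le.trans h.ab)
  have hfin : AllFinite (zigzag v a b c) (turnBack b) :=
    ⟨⟨_, (isLeast_meet₁ h).1⟩, ⟨_, (isLeast_meet₂ h).1⟩, ⟨_, (isLeast_meet₃ h).1⟩,
      ⟨_, (isLeast_meet₄ h).1⟩⟩
  refine ⟨⟨_, hf, _, hg, hfin, ?_⟩, ?_⟩
  · rw [timesMultiset, m₁, m₂, m₃, m₄]
    simp only [Multiset.insert_eq_cons]
    rw [Multiset.cons_swap c a, Multiset.cons_swap c b]
  · have hV : V v ≤ sumTimes (zigzag v a b c) (turnBack b) := by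
      refine csInf_le ⟨0, ?_⟩ ⟨_, hf, _, hg, hfin, rfl⟩
      rintro _ ⟨f, -, g, -, -, rfl⟩
      have := meetTime_nonneg f g
      exact add_nonneg (add_nonneg (add_nonneg (this _ _) (this _ _)) (this _ _)) (this _ _)
    refine hV.trans_eq ?_
    rw [sumTimes, m₁, m₂, m₃, m₄, ha, hb, hc, hd, add_comm v 1]
    field_simp
    ring
end

section
/- Crossover of the two candidate rendezvous values: for every v ∈ [0,1], the inequality (4v²+16v+8)/(1+v)² ≤ (16v²+28v+8)/(1+v)³ holds if and only if v ≤ (√5 − 1)/2. -/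
/-!
Clearing denominators, the right side minus the left side equals `4v(1 - v - v²)/(1 + v)³`.
For `v > 0` its sign is that of `1 - v - v²`, whose positive root is `(√5 - 1)/2`;
at `v = 0` both sides of the equivalence hold.
-/

open Set

/-- Crossover of the two candidate rendezvous values: the wait-for-mummy value
`(4v² + 16v + 8)/(1 + v)²` is at most the moving-strategy value
`(16v² + 28v + 8)/(1 + v)³` exactly when `v ≤ (√5 - 1)/2`. -/
theorem crossover_of_candidate_values (v : ℝ) (hv : v ∈ Icc (0 : ℝ) 1) :
    (4 * v ^ 2 + 16 * v + 8) / (1 + v) ^ 2 ≤ (16 * v ^ 2 + 28 * v + 8) / (1 + v) ^ 3 ↔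
      v ≤ (Real.sqrt 5 - 1) / 2 := by
  have h0 : 0 ≤ v := hv.1
  have hp : 0 < 1 + v := by linarith
  have hdiff : (16 * v ^ 2 + 28 * v + 8) / (1 + v) ^ 3 - (4 * v ^ 2 + 16 * v + 8) / (1 + v) ^ 2
      = 4 * v * (1 - v - v ^ 2) / (1 + v) ^ 3 := by
    field_simp
    ring
  have hroot : v ≤ (Real.sqrt 5 - 1) / 2 ↔ 0 ≤ 1 - v - v ^ 2 := by
    have h1 : v ≤ (Real.sqrt 5 - 1) / 2 ↔ 2 * v + 1 ≤ Real.sqrt 5 := by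
      constructor <;> intro h <;> linarith
    rw [h1, Real.le_sqrt' (by linarith)]
    constructor <;> intro h <;> nlinarith
  rw [← sub_nonneg, hdiff, hroot, le_div_iff₀ (pow_pos hp 3), zero_mul]
  rcases h0.eq_or_lt with rfl | hpos
  · norm_num
  · exact mul_nonneg_iff_of_pos_left (by linarith)
end
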